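/- arXiv:2102.09522 — 2 statements merged into one kernel-verified Lean document; each statement's English description precedes it below -/
import Mathlib

section
/- Let j ≥ 1 and N = 4j−1. Let H_{2j−2} ≤ S_N be the hyperoctahedral subgroup on the pairs P_i = {2i+2, 2i+3} (i = 1,…,2j−2), with character L_{2j−2} (for j = 1 this subgroup is trivial and the corresponding condition is vacuous). Then the subspace of Λ^{2j} U_N consisting of all v such that (i) σ·v = sgn(σ)·v for every permutation σ of the letters {1,2,3} fixing all other letters, and (ii) g·v = L_{2j−2}(g)·v for every g ∈ H_{2j−2}, is exactly one-dimensional. (This is the representation-theoretic content of the statement that the θ_{2j+1}-summand of the co-Feynman transform in bidegree (2j+1, 2j) is one-dimensional.) -/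
noncomputable section

/-- The sum-of-coordinates linear functional on `ℚ^N`. -/
def sumMap (N : ℕ) : (Fin N → ℚ) →ₗ[ℚ] ℚ := ∑ i, LinearMap.proj i

/-- The standard representation `U_N = {x ∈ ℚ^N : ∑ x_i = 0}` of the symmetric group. -/
def U (N : ℕ) : Submodule ℚ (Fin N → ℚ) := LinearMap.ker (sumMap N)

lemma mem_U {N : ℕ} (x : Fin N → ℚ) : x ∈ U N ↔ ∑ i, x i = 0 := by
  simp [U, sumMap, LinearMap.mem_ker]

/-- The action of a permutation on `ℚ^N` by permuting coordinates. -/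
def permMap (N : ℕ) (σ : Equiv.Perm (Fin N)) : (Fin N → ℚ) →ₗ[ℚ] (Fin N → ℚ) :=
  LinearMap.funLeft ℚ ℚ ⇑σ⁻¹

lemma permMap_mem {N : ℕ} (σ : Equiv.Perm (Fin N)) {x : Fin N → ℚ} (hx : x ∈ U N) :
    permMap N σ x ∈ U N := by
  rw [mem_U] at hx ⊢
  simpa [permMap, LinearMap.funLeft_apply, Function.comp] using
    (Equiv.sum_comp σ⁻¹ x).trans hx

/-- The action of a permutation on the standard representation `U_N`. -/
def permU (N : ℕ) (σ : Equiv.Perm (Fin N)) : ↥(U N) →ₗ[ℚ] ↥(U N) :=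
  (permMap N σ).restrict fun _ hx => permMap_mem σ hx

/-- The induced (diagonal) action on the exterior algebra of `U_N`; it preserves each
exterior power `⋀[ℚ]^k U_N`. -/
def act (N : ℕ) (σ : Equiv.Perm (Fin N)) :
    ExteriorAlgebra ℚ ↥(U N) →ₗ[ℚ] ExteriorAlgebra ℚ ↥(U N) :=
  (ExteriorAlgebra.map (permU N σ)).toLinearMap

/-- The eigenspace of a linear endomorphism for the eigenvalue `c`. -/
def eigen {V : Type*} [AddCommGroup V] [Module ℚ V] (f : V →ₗ[ℚ] V) (c : ℚ) :
    Submodule ℚ V := LinearMap.ker (f - c • LinearMap.id)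

/-- `g` belongs to the hyperoctahedral subgroup of `S_N` on the `q` pairs
`{a+2i, a+2i+1}` (`0 ≤ i < q`), inducing the permutation `τ` on the set of pairs:
`g` fixes every letter outside the pairs, and sends the `i`-th pair to the `τ(i)`-th pair. -/
def IsHypAt (a : ℕ) {N q : ℕ} (g : Equiv.Perm (Fin N)) (τ : Equiv.Perm (Fin q)) : Prop :=
  (∀ i : Fin N, ((i : ℕ) < a ∨ a + 2*q ≤ (i : ℕ)) → g i = i) ∧
  ∀ i : Fin N, ∀ _h1 : a ≤ (i : ℕ), ∀ _h2 : (i : ℕ) < a + 2*q,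
    ((g i : ℕ) - a)/2 = ((τ ⟨((i : ℕ) - a)/2, by omega⟩ : Fin q) : ℕ)

end

/-!
Contract every pair of letters to one block, so that the letters outside the pairs together with
the pairs form a set `β` of `k + 1` blocks. The swap of a pair acts on `U_N` as a reflection
`x ↦ x - f(x) b`, hence on the exterior algebra as `v ↦ v - b ∧ (f ⌟ v)`. If it fixes `v`, then so
does the map induced by the projection `x ↦ x - f(x) b / 2` onto `ker f`. The vectors of `Λ^k U_N`
fixed by all these swaps therefore lie in `Λ^k W`, where `W` consists of the vectors that are
constant on blocks.

Now `W` is the hyperplane of `ℚ^β` cut out by the functional which weights each block by its number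
of letters, so `dim W = k` and `Λ^k W` is a line. A permutation of the letters which induces a
permutation `π` of the blocks acts on this line by its determinant on `W`. This equals its
determinant `sgn π` on `ℚ^β`, because it preserves the functional. For the two subgroups in
question, `sgn π` is the prescribed character.
-/

open Module

section ExteriorAlgebra

variable {R M N : Type*} [CommRing R] [AddCommGroup M] [Module R M] [AddCommGroup N] [Module R N]

/-- The image of `Λ^n W` in the exterior algebra of the ambient module: the span of the `n`-fold
wedge products of elements of the submodule `W`. -/
def wedgePower (n : ℕ) (W : Submodule R M) : Submodule R (ExteriorAlgebra R M) :=
  (W.map (ExteriorAlgebra.ι R)) ^ n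

lemma wedgePower_top (n : ℕ) : wedgePower n (⊤ : Submodule R M) = ⋀[R]^n M := by
  rw [wedgePower, Submodule.map_top]

lemma wedgePower_mono {W W' : Submodule R M} (n : ℕ) (h : W ≤ W') :
    wedgePower n W ≤ wedgePower n W' :=
  pow_le_pow_left' (Submodule.map_mono h) n

lemma wedgePower_le (n : ℕ) (W : Submodule R M) : wedgePower n W ≤ ⋀[R]^n M := by
  rw [← wedgePower_top]
  exact wedgePower_mono n le_top

lemma map_wedgePower (f : M →ₗ[R] N) (n : ℕ) (W : Submodule R M) :
    (wedgePower n W).map (ExteriorAlgebra.map f).toLinearMap = wedgePower n (W.map f) := by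
  rw [wedgePower, wedgePower, Submodule.map_pow, ← Submodule.map_comp, ← Submodule.map_comp,
    ExteriorAlgebra.map_comp_ι]

lemma wedgePower_range (f : M →ₗ[R] N) (n : ℕ) :
    wedgePower n (LinearMap.range f) = (⋀[R]^n M).map (ExteriorAlgebra.map f).toLinearMap := by
  rw [← wedgePower_top, map_wedgePower, Submodule.map_top]

lemma exteriorAlgebra_map_preReflection_apply (b : M) (f : Dual R M) (v : ExteriorAlgebra R M) :
    ExteriorAlgebra.map (preReflection b f) v =
      v - ExteriorAlgebra.ι R b * CliffordAlgebra.contractLeft f v := by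
  induction v using CliffordAlgebra.left_induction with
  | algebraMap r =>
    rw [CliffordAlgebra.contractLeft_algebraMap, mul_zero, sub_zero]
    exact AlgHom.commutes _ r
  | add x y hx hy => rw [map_add, map_add, hx, hy, mul_add]; abel
  | ι_mul x m hx =>
    change ExteriorAlgebra.map _ (ExteriorAlgebra.ι R m * x) = ExteriorAlgebra.ι R m * x -
      ExteriorAlgebra.ι R b * CliffordAlgebra.contractLeft f (CliffordAlgebra.ι 0 m * x)
    have swap : ExteriorAlgebra.ι R m * ExteriorAlgebra.ι R b =
        -(ExteriorAlgebra.ι R b * ExteriorAlgebra.ι R m) :=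
      eq_neg_of_add_eq_zero_left (ExteriorAlgebra.ι_add_mul_swap m b)
    rw [map_mul, hx, ExteriorAlgebra.map_apply_ι, preReflection_apply, map_sub, map_smul,
      CliffordAlgebra.contractLeft_ι_mul]
    simp only [sub_mul, mul_sub, smul_mul_assoc, mul_smul_comm, ← mul_assoc, swap,
      ExteriorAlgebra.ι_sq_zero, neg_mul, zero_mul, smul_zero]
    change _ = _ - (_ - ExteriorAlgebra.ι R b * ExteriorAlgebra.ι R m * _)
    abel

lemma exteriorAlgebra_map_preReflection_smul_eq_self {b : M} {f : Dual R M}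
    {v : ExteriorAlgebra R M}
    (hv : ExteriorAlgebra.map (preReflection b f) v = v) (c : R) :
    ExteriorAlgebra.map (preReflection b (c • f)) v = v := by
  rw [exteriorAlgebra_map_preReflection_apply, sub_eq_self] at hv ⊢
  rw [map_smul, LinearMap.smul_apply, mul_smul_comm, hv, smul_zero]

variable [Invertible (2 : R)]

lemma mem_wedgePower_inf_ker {n : ℕ} {W : Submodule R M} {b : M} {f : Dual R M}
    {v : ExteriorAlgebra R M} (hb : b ∈ W) (hfb : f b = 2) (hvW : v ∈ wedgePower n W)
    (hv : ExteriorAlgebra.map (preReflection b f) v = v) :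
    v ∈ wedgePower n (W ⊓ LinearMap.ker f) := by
  have hmap : W.map (preReflection b (⅟(2 : R) • f)) ≤ W ⊓ LinearMap.ker f := by
    rintro _ ⟨x, hx, rfl⟩
    rw [preReflection_apply]
    refine ⟨W.sub_mem hx (W.smul_mem _ hb), ?_⟩
    simp [hfb, mul_right_comm]
  refine wedgePower_mono n hmap ?_
  rw [← map_wedgePower]
  exact ⟨v, hvW, exteriorAlgebra_map_preReflection_smul_eq_self hv _⟩

lemma mem_wedgePower_iInf_ker {κ : Type*} [Finite κ] {n : ℕ} {b : κ → M} {f : κ → Dual R M}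
    {v : ExteriorAlgebra R M} (hfb : ∀ i, f i (b i) = 2) (hfb' : ∀ i j, i ≠ j → f i (b j) = 0)
    (hvn : v ∈ ⋀[R]^n M) (hv : ∀ i, ExteriorAlgebra.map (preReflection (b i) (f i)) v = v) :
    v ∈ wedgePower n (⨅ i, LinearMap.ker (f i)) := by
  classical
  have := Fintype.ofFinite κ
  suffices h : ∀ s : Finset κ, v ∈ wedgePower n (⨅ i ∈ s, LinearMap.ker (f i)) by
    simpa using h Finset.univ
  intro s
  induction s using Finset.induction_on with
  | empty => simpa [wedgePower_top] using hvn
  | insert i s hi ih =>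
    rw [Finset.iInf_insert, inf_comm]
    refine mem_wedgePower_inf_ker ?_ (hfb i) ih (hv i)
    simp only [Submodule.mem_iInf, LinearMap.mem_ker]
    exact fun j hj => hfb' j i (ne_of_mem_of_not_mem hj hi)

end ExteriorAlgebra

section Determinant

lemma alternatingMap_apply_eq_det_smul {R M N ι : Type*} [CommRing R] [AddCommGroup M] [Module R M]
    [AddCommGroup N] [Module R N] [Fintype ι] [DecidableEq ι] (e : Basis ι R M)
    (f : M [⋀^ι]→ₗ[R] N) (v : ι → M) : f v = e.det v • f e := by
  suffices h : f = (LinearMap.toSpanSingleton R N (f e)).compAlternatingMap e.det from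
    DFunLike.congr_fun h v
  refine Basis.ext_alternating e fun i hi => ?_
  let σ : Equiv.Perm ι := Equiv.ofBijective i (Finite.injective_iff_bijective.1 hi)
  change f (e ∘ σ) = e.det (e ∘ σ) • f e
  rw [AlternatingMap.map_perm, AlternatingMap.map_perm, e.det_self, smul_assoc, one_smul]

lemma exteriorAlgebra_map_eq_det_smul {R M : Type*} [CommRing R] [Nontrivial R] [AddCommGroup M]
    [Module R M] [Module.Free R M] [Module.Finite R M] (T : End R M) {v : ExteriorAlgebra R M}
    (hv : v ∈ ⋀[R]^(finrank R M) M) :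
    ExteriorAlgebra.map T v = LinearMap.det T • v := by
  let e := finBasis R M
  rw [← ExteriorAlgebra.ιMulti_span_fixedDegree] at hv
  induction hv using Submodule.span_induction with
  | mem x hx =>
    obtain ⟨u, rfl⟩ := hx
    rw [ExteriorAlgebra.map_apply_ιMulti, alternatingMap_apply_eq_det_smul e, e.det_comp, mul_smul,
      ← alternatingMap_apply_eq_det_smul e]
  | zero => simp
  | add x y _ _ hx hy => rw [map_add, hx, hy, smul_add]
  | smul c x _ hx => rw [map_smul, hx, smul_comm]

lemma det_restrict_ker {K V : Type*} [Field K] [AddCommGroup V] [Module K V]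
    [FiniteDimensional K V] {ℓ : Dual K V} {f : End K V} (hf : ℓ ∘ₗ f = ℓ)
    (hker : LinearMap.ker ℓ ≤ (LinearMap.ker ℓ).comap f) :
    LinearMap.det (f.restrict hker) = LinearMap.det f := by
  have hquot : (LinearMap.ker ℓ).mapQ _ f hker = LinearMap.id := by
    refine Submodule.linearMap_qext _ (LinearMap.ext fun x => ?_)
    simpa [Submodule.Quotient.eq, sub_eq_zero] using LinearMap.congr_fun hf x
  rw [LinearMap.det_eq_det_mul_det (LinearMap.ker ℓ) f hker, hquot, LinearMap.det_id, mul_one]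

lemma det_funLeft_perm {R n : Type*} [CommRing R] [Fintype n] [DecidableEq n] (π : Equiv.Perm n) :
    LinearMap.det (LinearMap.funLeft R R π) = (Equiv.Perm.sign π : ℤ) := by
  have h : LinearMap.funLeft R R π = (π.permMatrix R).toLin' := by
    refine LinearMap.ext fun x => ?_
    rw [Matrix.toLin'_apply, Matrix.permMatrix_mulVec]
    rfl
  rw [h, LinearMap.det_toLin', Matrix.det_permutation]

end Determinant

lemma mem_eigen {V : Type*} [AddCommGroup V] [Module ℚ V] {f : V →ₗ[ℚ] V} {c : ℚ} {v : V} :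
    v ∈ eigen f c ↔ f v = c • v := by
  simp [eigen, sub_eq_zero]

section Swap

variable {N : ℕ}

/-- The root `e_x - e_y` of the standard representation, the `-1`-eigenvector of the swap of the
letters `x` and `y`. -/
def root (x y : Fin N) : U N :=
  ⟨Pi.single x 1 - Pi.single y 1, by simp [mem_U, Finset.sum_sub_distrib]⟩

/-- The coroot `z ↦ z x - z y` on the standard representation; the swap of the letters `x` and `y`
is the reflection in `root x y` along it. -/
def coroot (x y : Fin N) : Dual ℚ (U N) :=
  ((LinearMap.proj x : Dual ℚ (Fin N → ℚ)) - LinearMap.proj y) ∘ₗ (U N).subtype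

lemma coroot_apply (x y : Fin N) (z : U N) : coroot x y z = z.1 x - z.1 y := rfl

lemma coroot_root_self {x y : Fin N} (h : x ≠ y) : coroot x y (root x y) = 2 := by
  have : (1 : ℚ) + 1 = 2 := one_add_one_eq_two
  simpa [coroot_apply, root, h, h.symm] using this

lemma coroot_root_of_disjoint {x y x' y' : Fin N} (hxx' : x ≠ x') (hxy' : x ≠ y') (hyx' : y ≠ x')
    (hyy' : y ≠ y') : coroot x y (root x' y') = 0 := by
  simp [coroot_apply, root, hxx', hxy', hyx', hyy']

lemma permU_swap (x y : Fin N) :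
    permU N (Equiv.swap x y) = preReflection (root x y) (coroot x y) := by
  refine LinearMap.ext fun z => Subtype.ext (funext fun w => ?_)
  change z.1 ((Equiv.swap x y)⁻¹ w) =
    z.1 w - (z.1 x - z.1 y) * ((Pi.single x 1 : Fin N → ℚ) w - (Pi.single y 1 : Fin N → ℚ) w)
  rw [Equiv.swap_inv]
  rcases eq_or_ne w x with rfl | hx
  · rcases eq_or_ne w y with rfl | hy
    · simp
    · simp [hy]
  · rcases eq_or_ne w y with rfl | hy
    · simp [hx]
    · simp [hx, hy, Equiv.swap_apply_of_ne_of_ne]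

end Swap

section Blocks

variable {N : ℕ} {β : Type*} (p : Fin N → β)

/-- For a map `p` from letters to blocks, the vectors of `ℚ^β` whose pullback to `ℚ^N` has
coordinate sum zero. This models the vectors of `U_N` that are constant on blocks. -/
def blockSpace : Submodule ℚ (β → ℚ) := (U N).comap (LinearMap.funLeft ℚ ℚ p)

/-- The pullback of functions on blocks to functions on letters, as a map into `U_N`. -/
def blockPullback : blockSpace p →ₗ[ℚ] U N := (LinearMap.funLeft ℚ ℚ p).restrict fun _ h => h

variable {p}

lemma ker_blockPullback_eq_bot (hp : p.Surjective) : LinearMap.ker (blockPullback p) = ⊥ :=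
  LinearMap.ker_eq_bot.2 fun _ _ h =>
    Subtype.ext (LinearMap.funLeft_injective_of_surjective ℚ ℚ p hp (congrArg Subtype.val h))

lemma mem_range_blockPullback_of_factorsThrough {z : U N} (hz : z.1.FactorsThrough p) :
    z ∈ LinearMap.range (blockPullback p) := by
  have h : LinearMap.funLeft ℚ ℚ p (Function.extend p z.1 0) = z.1 :=
    funext fun x => hz.extend_apply 0 x
  exact ⟨⟨Function.extend p z.1 0, (congrArg (· ∈ U N) h).mpr z.2⟩, Subtype.ext h⟩

variable (p) in
/-- The functional on `ℚ^β` which weights each block by its number of letters. -/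
def blockSum : Dual ℚ (β → ℚ) := sumMap N ∘ₗ LinearMap.funLeft ℚ ℚ p

lemma ker_blockSum : LinearMap.ker (blockSum p) = blockSpace p := rfl

lemma blockSum_ne_zero [NeZero N] : blockSum p ≠ 0 := by
  intro h
  have h1 : blockSum p 1 = N := by simp [blockSum, sumMap, LinearMap.funLeft_apply]
  rw [h, LinearMap.zero_apply] at h1
  exact NeZero.ne (N : ℚ) h1.symm

lemma finrank_blockSpace [NeZero N] [Fintype β] {k : ℕ} (hk : k + 1 = Fintype.card β) :
    finrank ℚ (blockSpace p) = k := by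
  rw [← Nat.add_right_cancel_iff (n := 1), hk, ← ker_blockSum,
    Dual.finrank_ker_add_one_of_ne_zero blockSum_ne_zero, finrank_fintype_fun_eq_card]

lemma finrank_wedgePower_range_blockPullback [NeZero N] [Fintype β] (hp : p.Surjective) {k : ℕ}
    (hk : k + 1 = Fintype.card β) :
    finrank ℚ (wedgePower k (LinearMap.range (blockPullback p))) = 1 := by
  have hinj : Function.Injective (ExteriorAlgebra.map (blockPullback p)).toLinearMap :=
    ExteriorAlgebra.map_injective_field (ker_blockPullback_eq_bot hp)
  rw [wedgePower_range, (Submodule.equivMapOfInjective _ hinj _).symm.finrank_eq,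
    exteriorPower.finrank_eq, finrank_blockSpace hk, Nat.choose_self]

section Action

variable {g : Equiv.Perm (Fin N)} {π : Equiv.Perm β}

lemma funLeft_comp_funLeft_inv (h : p ∘ g = π ∘ p) :
    LinearMap.funLeft ℚ ℚ p ∘ₗ LinearMap.funLeft ℚ ℚ ⇑π⁻¹ =
      permMap N g ∘ₗ LinearMap.funLeft ℚ ℚ p := by
  have hinv (x : Fin N) : π⁻¹ (p x) = p (g⁻¹ x) := by
    rw [Equiv.Perm.inv_eq_iff_eq]
    simpa using congrFun h (g⁻¹ x)
  exact LinearMap.ext fun y => funext fun x => congrArg y (hinv x)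

lemma blockSum_comp_funLeft_inv (h : p ∘ g = π ∘ p) :
    blockSum p ∘ₗ LinearMap.funLeft ℚ ℚ ⇑π⁻¹ = blockSum p := by
  rw [blockSum, LinearMap.comp_assoc, funLeft_comp_funLeft_inv h]
  refine LinearMap.ext fun y => ?_
  simpa [sumMap, permMap] using Equiv.sum_comp g⁻¹ (y ∘ p)

lemma act_eq_sign_smul [NeZero N] [Fintype β] [DecidableEq β] {k : ℕ}
    (hk : k + 1 = Fintype.card β) (h : p ∘ g = π ∘ p) {v : ExteriorAlgebra ℚ (U N)}
    (hv : v ∈ wedgePower k (LinearMap.range (blockPullback p))) :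
    act N g v = ((Equiv.Perm.sign π : ℤ) : ℚ) • v := by
  have hℓ := blockSum_comp_funLeft_inv h
  have hker : LinearMap.ker (blockSum p) ≤
      (LinearMap.ker (blockSum p)).comap (LinearMap.funLeft ℚ ℚ ⇑π⁻¹) := fun y hy =>
    (LinearMap.congr_fun hℓ y).trans hy
  let T : End ℚ (blockSpace p) := (LinearMap.funLeft ℚ ℚ ⇑π⁻¹).restrict hker
  have hdet : LinearMap.det T = ((Equiv.Perm.sign π : ℤ) : ℚ) := by
    rw [← Equiv.Perm.sign_inv, ← det_funLeft_perm]
    exact det_restrict_ker hℓ hker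
  have hT : permU N g ∘ₗ blockPullback p = blockPullback p ∘ₗ T := LinearMap.ext fun y =>
    Subtype.ext (LinearMap.congr_fun (funLeft_comp_funLeft_inv h) y.1).symm
  obtain rfl : finrank ℚ (blockSpace p) = k := finrank_blockSpace hk
  rw [wedgePower_range] at hv
  obtain ⟨w, hw, rfl⟩ := hv
  calc ExteriorAlgebra.map (permU N g) (ExteriorAlgebra.map (blockPullback p) w)
      = ExteriorAlgebra.map (blockPullback p) (ExteriorAlgebra.map T w) := by
        rw [← AlgHom.comp_apply, ← AlgHom.comp_apply, ExteriorAlgebra.map_comp_map,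
          ExteriorAlgebra.map_comp_map, hT]
    _ = _ := by rw [exteriorAlgebra_map_eq_det_smul T hw, hdet, map_smul]; rfl

end Action

end Blocks

section Pairs

variable {a q : ℕ}

/-- The map from the letters to the blocks of the partition of `{0, …, a + 2q - 1}` into the
singletons `{0}, …, {a - 1}` and the pairs `{a + 2i, a + 2i + 1}`. -/
def blockMap (a q : ℕ) (x : Fin (a + 2 * q)) : Fin a ⊕ Fin q :=
  if h : (x : ℕ) < a then .inl ⟨x, h⟩ else .inr ⟨(x - a) / 2, by omega⟩

/-- The first letter of the `i`-th pair. -/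
def pairFst (a : ℕ) (i : Fin q) : Fin (a + 2 * q) := ⟨a + 2 * i, by omega⟩

/-- The second letter of the `i`-th pair. -/
def pairSnd (a : ℕ) (i : Fin q) : Fin (a + 2 * q) := ⟨a + 2 * i + 1, by omega⟩

lemma blockMap_of_lt {x : Fin (a + 2 * q)} (h : (x : ℕ) < a) : blockMap a q x = .inl ⟨x, h⟩ :=
  dif_pos h

lemma blockMap_of_le {x : Fin (a + 2 * q)} (h : a ≤ (x : ℕ)) :
    blockMap a q x = .inr ⟨(x - a) / 2, by omega⟩ :=
  dif_neg h.not_gt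

lemma blockMap_surjective : (blockMap a q).Surjective := by
  rintro (c | i)
  · exact ⟨⟨c, by omega⟩, blockMap_of_lt c.2⟩
  · refine ⟨pairFst a i, (blockMap_of_le (Nat.le_add_right _ _)).trans ?_⟩
    simp [pairFst]

lemma factorsThrough_blockMap {γ : Type*} {z : Fin (a + 2 * q) → γ}
    (hz : ∀ i, z (pairFst a i) = z (pairSnd a i)) : z.FactorsThrough (blockMap a q) := by
  have hfst (x : Fin (a + 2 * q)) (hx : a ≤ (x : ℕ)) :
      z x = z (pairFst a ⟨(x - a) / 2, by omega⟩) := by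
    have hcases :
        x = pairFst a ⟨(x - a) / 2, by omega⟩ ∨ x = pairSnd a ⟨(x - a) / 2, by omega⟩ := by
      simp only [Fin.ext_iff, pairFst, pairSnd]
      omega
    rcases hcases with h | h
    · exact congrArg z h
    · exact (congrArg z h).trans (hz _).symm
  intro x y hxy
  rcases lt_or_ge (x : ℕ) a with hx | hx <;> rcases lt_or_ge (y : ℕ) a with hy | hy
  · rw [blockMap_of_lt hx, blockMap_of_lt hy, Sum.inl.injEq, Fin.mk.injEq] at hxy
    rw [Fin.ext hxy]
  · simp [blockMap_of_lt hx, blockMap_of_le hy] at hxy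
  · simp [blockMap_of_le hx, blockMap_of_lt hy] at hxy
  · rw [blockMap_of_le hx, blockMap_of_le hy, Sum.inr.injEq] at hxy
    rw [hfst x hx, hfst y hy, hxy]

lemma blockMap_comp_of_isHypAt {g : Equiv.Perm (Fin (a + 2 * q))} {τ : Equiv.Perm (Fin q)}
    (h : IsHypAt a g τ) : blockMap a q ∘ g = Equiv.sumCongr 1 τ ∘ blockMap a q := by
  funext x
  rcases lt_or_ge (x : ℕ) a with hx | hx
  · simp [h.1 x (.inl hx), blockMap_of_lt hx]
  · have hgx : a ≤ (g x : ℕ) := by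
      by_contra! hlt
      have : g x = x := g.injective (h.1 (g x) (.inl hlt))
      omega
    simpa [blockMap_of_le hx, blockMap_of_le hgx, Fin.ext_iff] using h.2 x hx x.2

lemma exists_perm_blockMap_comp_of_fixes {σ : Equiv.Perm (Fin (a + 2 * q))}
    (h : ∀ x : Fin (a + 2 * q), a ≤ (x : ℕ) → σ x = x) :
    ∃ π : Equiv.Perm (Fin a ⊕ Fin q),
      Equiv.Perm.sign π = Equiv.Perm.sign σ ∧ blockMap a q ∘ σ = π ∘ blockMap a q := by
  have hlt (x : Fin (a + 2 * q)) : (σ x : ℕ) < a ↔ (x : ℕ) < a := by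
    rw [← not_iff_not, not_lt, not_lt]
    refine ⟨fun hx => ?_, fun hx => (h x hx).symm ▸ hx⟩
    rwa [σ.injective (h (σ x) hx)] at hx
  let e : {x : Fin (a + 2 * q) // (x : ℕ) < a} ≃ Fin a :=
    { toFun := fun x => ⟨x.1, x.2⟩
      invFun := fun c => ⟨⟨c, by omega⟩, c.2⟩
      left_inv := fun _ => rfl
      right_inv := fun _ => rfl }
  refine ⟨Equiv.sumCongr (e.permCongr (σ.subtypePerm hlt)) 1, ?_, funext fun x => ?_⟩
  · rw [Equiv.Perm.sign_sumCongr, Equiv.Perm.sign_permCongr, Equiv.Perm.sign_one, mul_one,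
      Equiv.Perm.sign_subtypePerm]
    intro x hx
    by_contra! hc
    exact hx (h x hc)
  · rcases lt_or_ge (x : ℕ) a with hx | hx
    · rw [Function.comp_apply, Function.comp_apply, blockMap_of_lt hx,
        blockMap_of_lt ((hlt x).2 hx)]
      rfl
    · rw [Function.comp_apply, Function.comp_apply, h x hx, blockMap_of_le hx]
      rfl

lemma isHypAt_swap (i : Fin q) :
    IsHypAt a (Equiv.swap (pairFst a i) (pairSnd a i)) (1 : Equiv.Perm (Fin q)) := by
  have hval (x : Fin (a + 2 * q)) : (Equiv.swap (pairFst a i) (pairSnd a i) x : ℕ) =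
      if (x : ℕ) = a + 2 * i then a + 2 * i + 1 else if (x : ℕ) = a + 2 * i + 1 then a + 2 * i
      else x := by
    simp only [Equiv.swap_apply_def, Fin.ext_iff, pairFst, pairSnd]
    split_ifs <;> rfl
  refine ⟨fun x hx => Fin.ext ?_, fun x hx _ => ?_⟩
  · rw [hval]
    split_ifs <;> omega
  · rw [hval, Equiv.Perm.one_apply]
    dsimp only
    split_ifs <;> omega

lemma mem_wedgePower_of_swap {n : ℕ} {v : ExteriorAlgebra ℚ (U (a + 2 * q))}
    (hvn : v ∈ ⋀[ℚ]^n (U (a + 2 * q)))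
    (hv : ∀ i, act _ (Equiv.swap (pairFst a i) (pairSnd a i)) v = v) :
    v ∈ wedgePower n (LinearMap.range (blockPullback (blockMap a q))) := by
  have hker : ⨅ i, LinearMap.ker (coroot (pairFst a i) (pairSnd a i)) ≤
      LinearMap.range (blockPullback (blockMap a q)) := by
    intro z hz
    simp only [Submodule.mem_iInf, LinearMap.mem_ker, coroot_apply, sub_eq_zero] at hz
    exact mem_range_blockPullback_of_factorsThrough (factorsThrough_blockMap hz)
  have hne (i : Fin q) : pairFst a i ≠ pairSnd a i := by simp [pairFst, pairSnd]
  have hdisj (i j : Fin q) (hij : i ≠ j) :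
      coroot (pairFst a i) (pairSnd a i) (root (pairFst a j) (pairSnd a j)) = 0 := by
    rw [ne_eq, Fin.ext_iff] at hij
    apply coroot_root_of_disjoint <;> simp only [ne_eq, Fin.ext_iff, pairFst, pairSnd] <;> omega
  refine wedgePower_mono n hker
    (mem_wedgePower_iInf_ker (fun i => coroot_root_self (hne i)) hdisj hvn fun i => ?_)
  rw [← permU_swap]
  exact hv i

lemma isotypic_eq_wedgePower {k : ℕ} (hk : k + 1 = a + q) :
    ((⋀[ℚ]^k ↥(U (a + 2 * q))) ⊓
      (⨅ (σ : Equiv.Perm (Fin (a + 2 * q))) (_ : ∀ x : Fin (a + 2 * q), a ≤ (x : ℕ) → σ x = x),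
        eigen (act (a + 2 * q) σ) ((Equiv.Perm.sign σ : ℤ) : ℚ)) ⊓
      ⨅ (g : Equiv.Perm (Fin (a + 2 * q))) (τ : Equiv.Perm (Fin q)) (_ : IsHypAt a g τ),
        eigen (act (a + 2 * q) g) ((Equiv.Perm.sign τ : ℤ) : ℚ)) =
      wedgePower k (LinearMap.range (blockPullback (blockMap a q))) := by
  have : NeZero (a + 2 * q) := ⟨by omega⟩
  have hcard : k + 1 = Fintype.card (Fin a ⊕ Fin q) := by simpa using hk
  ext v
  simp only [Submodule.mem_inf, Submodule.mem_iInf, mem_eigen]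
  constructor
  · rintro ⟨⟨hvk, -⟩, hv⟩
    exact mem_wedgePower_of_swap hvk fun i => by simpa using hv _ 1 (isHypAt_swap i)
  · intro hv
    refine ⟨⟨?_, fun σ hσ => ?_⟩, fun g τ hg => ?_⟩
    · exact wedgePower_le k _ hv
    · obtain ⟨π, hsign, hπ⟩ := exists_perm_blockMap_comp_of_fixes hσ
      rw [act_eq_sign_smul hcard hπ hv, hsign]
    · rw [act_eq_sign_smul hcard (blockMap_comp_of_isHypAt hg) hv, Equiv.Perm.sign_sumCongr,
        Equiv.Perm.sign_one, one_mul]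

end Pairs

theorem stmt3_general {a q N k : ℕ} (hN : N = a + 2 * q) (hk : k + 1 = a + q) :
    Module.finrank ℚ
      ↥((⋀[ℚ]^k ↥(U N)) ⊓
        (⨅ (σ : Equiv.Perm (Fin N)) (_ : ∀ i : Fin N, a ≤ (i : ℕ) → σ i = i),
          eigen (act N σ) ((Equiv.Perm.sign σ : ℤ) : ℚ)) ⊓
        ⨅ (g : Equiv.Perm (Fin N)) (τ : Equiv.Perm (Fin q)) (_ : IsHypAt a g τ),
          eigen (act N g) ((Equiv.Perm.sign τ : ℤ) : ℚ)) = 1 := by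
  subst hN
  have : NeZero (a + 2 * q) := ⟨by omega⟩
  rw [isotypic_eq_wedgePower hk]
  exact finrank_wedgePower_range_blockPullback blockMap_surjective (by simpa using hk)

/-- Let `j ≥ 1` and `N = 4j−1`.  The subspace of `Λ^{2j} U_N` of vectors `v` such
that (i) every permutation of the letters `{1,2,3}` fixing the other letters acts on `v` by its
sign, and (ii) every element of the hyperoctahedral subgroup `H_{2j−2}` on the pairs
`{2i+2, 2i+3}` (`i = 1,…,2j−2`) acts on `v` by `L_{2j−2}`, is exactly one-dimensional. -/
theorem stmt3 (j : ℕ) (hj : 1 ≤ j) :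
    Module.finrank ℚ
      ↥((⋀[ℚ]^(2*j) ↥(U (4*j-1))) ⊓
        (⨅ (σ : Equiv.Perm (Fin (4*j-1))) (_ : ∀ i : Fin (4*j-1), 3 ≤ (i : ℕ) → σ i = i),
          eigen (act (4*j-1) σ) ((Equiv.Perm.sign σ : ℤ) : ℚ)) ⊓
        ⨅ (g : Equiv.Perm (Fin (4*j-1))) (τ : Equiv.Perm (Fin (2*j-2))) (_ : IsHypAt 3 g τ),
          eigen (act (4*j-1) g) ((Equiv.Perm.sign τ : ℤ) : ℚ)) = 1 :=
  stmt3_general (by omega) (by omega)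
end

section
/- Let t ≥ 2 and j ≥ 1, let G = S_{t+2j}, and set z = (1 + (1 t+1) + (2 t+1) + ⋯ + (t t+1)) · y ∈ ℚ[G], where (i t+1) denotes a transposition. Then z ≠ 0, and the left ideal ℚ[G]·z is a simple left ℚ[G]-module isomorphic to Λ^{2j−1} U_{t+2j} (the irreducible hook representation V_{t+1,1^{2j−1}}). -/
noncomputable section

set_option synthInstance.maxHeartbeats 1000000
set_option maxHeartbeats 1000000

/-- `y = (∑_{σ ∈ S_{1,…,t}} σ) · (∑_{τ ∈ S_{t+1,…,t+2j}} sgn(τ) τ)` in the group algebra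
`ℚ[S_{t+2j}]`, where `S_A` is the subgroup of permutations fixing every letter outside `A`. -/
def yElt (t j : ℕ) : MonoidAlgebra ℚ (Equiv.Perm (Fin (t + 2*j))) :=
  (∑ σ ∈ Finset.univ.filter
      (fun σ : Equiv.Perm (Fin (t + 2*j)) => ∀ i : Fin (t + 2*j), t ≤ (i : ℕ) → σ i = i),
    MonoidAlgebra.of ℚ _ σ) *
  (∑ τ ∈ Finset.univ.filter
      (fun τ : Equiv.Perm (Fin (t + 2*j)) => ∀ i : Fin (t + 2*j), (i : ℕ) < t → τ i = i),
    ((Equiv.Perm.sign τ : ℤ) : ℚ) • MonoidAlgebra.of ℚ _ τ)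

/-- `z = (1 + (1 t+1) + (2 t+1) + ⋯ + (t t+1)) · y` in `ℚ[S_{t+2j}]`. -/
def zElt (t j : ℕ) (hj : 1 ≤ j) : MonoidAlgebra ℚ (Equiv.Perm (Fin (t + 2*j))) :=
  (1 + ∑ i : Fin t, MonoidAlgebra.of ℚ _
      (Equiv.swap (Fin.castLE (by omega) i) (⟨t, by omega⟩ : Fin (t + 2*j)))) * yElt t j

end

noncomputable section

/-!
Multiplying the row symmetrizer of `S_t` by `1 + (1 t+1) + ⋯ + (t t+1)` gives the row symmetrizer of
`S_{t+1}`, so `z = a b` is the Young symmetrizer of a hook. By von Neumann's lemma `a x b` is a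
multiple of `a b` for every `x` in the group algebra, which makes the left ideal of `z` simple as
soon as `z ≠ 0`. To compare it with `Λ^k U_N`, contract the wedge product of the basis vectors of
the column with the sum-of-coordinates functional and project to `U_N`. On the resulting vector `v`
the column antisymmetrizer acts by a scalar, and the row symmetrizer replaces, up to a scalar, the
corner entry by the sum of all basis vectors. That sum projects to zero in `U_N`, so only one term
of the contraction survives and `z v` is a non-zero multiple of the wedge product of the projections
of the other column entries. That vector generates `Λ^k U_N`, so `z ≠ 0` and `x ↦ x v` is
the required isomorphism.
-/

section CharacterSum

open Equiv

variable {K G : Type*} [CommSemiring K] [Group G] [Fintype G]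

open Classical in
/-- The sum `∑ h ∈ H, χ h • h` in the group algebra: for a subgroup `H` of a symmetric group it is
the symmetrizer of `H` when `χ = 1` and its antisymmetrizer when `χ` is the sign. -/
def characterSum (χ : G →* K) (H : Subgroup G) : MonoidAlgebra K G :=
  ∑ h with h ∈ H, χ h • MonoidAlgebra.of K G h

lemma of_mul_characterSum (χ : G →* K) {H : Subgroup G} {h : G} (hh : h ∈ H) :
    MonoidAlgebra.of K G h * characterSum χ H = χ h⁻¹ • characterSum χ H := by
  simp only [characterSum, Finset.mul_sum, Finset.smul_sum]
  refine Finset.sum_equiv (Equiv.mulLeft h) (fun g ↦ ?_) (fun g _ ↦ ?_)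
  · simp [H.mul_mem_cancel_left hh]
  · rw [coe_mulLeft, smul_smul, ← map_mul χ, inv_mul_cancel_left, map_mul, mul_smul_comm]

lemma characterSum_mul_of (χ : G →* K) {H : Subgroup G} {h : G} (hh : h ∈ H) :
    characterSum χ H * MonoidAlgebra.of K G h = χ h⁻¹ • characterSum χ H := by
  simp only [characterSum, Finset.sum_mul, Finset.smul_sum]
  refine Finset.sum_equiv (Equiv.mulRight h) (fun g ↦ ?_) (fun g _ ↦ ?_)
  · simp [H.mul_mem_cancel_right hh]
  · rw [coe_mulRight, smul_smul, mul_comm (χ h⁻¹), ← map_mul χ, mul_inv_cancel_right, map_mul,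
      smul_mul_assoc]

lemma asAlgebraHom_characterSum_of_eigenvector {V : Type*} [AddCommMonoid V] [Module K V]
    (ρ : Representation K G V) (χ : G →* K) (H : Subgroup G) {v : V}
    (hv : ∀ h ∈ H, ρ h v = χ h⁻¹ • v) :
    ρ.asAlgebraHom (characterSum χ H) v = (Nat.card H : K) • v := by
  classical
  have hterm (h : G) (hh : h ∈ H) : χ h • ρ h v = v := by
    rw [hv h hh, smul_smul, ← map_mul, mul_inv_cancel, map_one, one_smul]
  simp only [characterSum, map_sum, map_smul, Representation.asAlgebraHom_of,
    LinearMap.sum_apply, LinearMap.smul_apply]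
  rw [Finset.sum_congr rfl fun h hh ↦ hterm h (Finset.mem_filter.mp hh).2, Finset.sum_const,
    Nat.cast_smul_eq_nsmul, Nat.card_eq_fintype_card, Fintype.card_subtype]

end CharacterSum

section SimpleLeftIdeal

variable {K G : Type*} [Field K] [Group G]

lemma exists_characterSum_mul_mul_eq_smul [Fintype G] {χ ψ : G →* K} {P Q : Subgroup G}
    (h : ∀ g : G, (∃ p ∈ P, ∃ q ∈ Q, p * q = g) ∨
      ∃ p ∈ P, ∃ q ∈ Q, p * g = g * q ∧ χ p ≠ ψ q) (x : MonoidAlgebra K G) :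
    ∃ c : K, characterSum χ P * x * characterSum ψ Q =
      c • (characterSum χ P * characterSum ψ Q) := by
  induction x using MonoidAlgebra.induction_on with
  | of g =>
    obtain ⟨p, hp, q, hq, rfl⟩ | ⟨p, hp, q, hq, hpq, hne⟩ := h g
    · refine ⟨χ p⁻¹ * ψ q⁻¹, ?_⟩
      rw [map_mul, ← mul_assoc, characterSum_mul_of χ hp, mul_assoc, of_mul_characterSum ψ hq,
        smul_mul_smul_comm]
    · refine ⟨0, ?_⟩
      rw [zero_smul]
      have hscalars : χ p⁻¹ • (characterSum χ P * MonoidAlgebra.of K G g * characterSum ψ Q) =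
          ψ q⁻¹ • (characterSum χ P * MonoidAlgebra.of K G g * characterSum ψ Q) := by
        rw [← smul_mul_assoc, ← smul_mul_assoc, ← characterSum_mul_of χ hp,
          mul_assoc (characterSum χ P), ← map_mul, hpq, map_mul, ← mul_assoc, mul_assoc,
          of_mul_characterSum ψ hq, mul_smul_comm]
      have hne' : χ p⁻¹ ≠ ψ q⁻¹ := by simpa [map_inv₀] using hne
      have hzero := sub_eq_zero.mpr hscalars
      rw [← sub_smul] at hzero
      exact (smul_eq_zero.mp hzero).resolve_left (sub_ne_zero.mpr hne')
  | add x y hx hy =>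
    obtain ⟨c, hc⟩ := hx
    obtain ⟨d, hd⟩ := hy
    exact ⟨c + d, by rw [mul_add, add_mul, hc, hd, add_smul]⟩
  | smul r x hx =>
    obtain ⟨c, hc⟩ := hx
    exact ⟨r * c, by rw [mul_smul_comm, smul_mul_assoc, hc, smul_smul]⟩

lemma isSimpleModule_span_mul {R : Type*} [Ring R] [Algebra K R]
    [IsSemisimpleRing R] {a b : R} (hab : a * b ≠ 0)
    (h : ∀ x, ∃ c : K, a * x * b = c • (a * b)) : IsSimpleModule R (Ideal.span {a * b}) := by
  rw [isSimpleModule_iff_isAtom]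
  refine ⟨by simpa [Ideal.span_singleton_eq_bot] using hab, fun L hL ↦ ?_⟩
  obtain ⟨e, he, rfl⟩ := IsSemisimpleRing.ideal_eq_span_idempotent L
  obtain ⟨u, rfl⟩ := Ideal.mem_span_singleton'.mp (hL.le (Ideal.mem_span_singleton_self e))
  obtain ⟨c, hc⟩ := h (b * u * a)
  have habe : a * b * (u * (a * b)) = c • (a * b) := by rw [← hc]; simp only [mul_assoc]
  by_contra hne
  have hc0 : c ≠ 0 := by
    rintro rfl
    refine hne ?_
    rw [Ideal.span_singleton_eq_bot, ← he.eq, mul_assoc, habe, zero_smul, mul_zero]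
  have hmem : a * b ∈ Ideal.span {u * (a * b)} := by
    have := Submodule.smul_of_tower_mem _ c⁻¹
      (Ideal.mul_mem_left _ (a * b) (Ideal.mem_span_singleton_self (u * (a * b))))
    rwa [habe, smul_smul, inv_mul_cancel₀ hc0, one_smul] at this
  exact hL.not_ge ((Ideal.span_singleton_le_iff_mem _).mpr hmem)

lemma exists_linearEquiv_of_isSimpleModule {V : Type*} [AddCommGroup V] [Module K V]
    (ρ : Representation K G V)
    {I : Ideal (MonoidAlgebra K G)} [IsSimpleModule (MonoidAlgebra K G) I]
    {z : MonoidAlgebra K G} (hz : z ∈ I) {v w : V} (hzv : ρ.asAlgebraHom z v = w) (hw : w ≠ 0)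
    (hspan : Submodule.span K (Set.range fun g ↦ ρ g w) = ⊤) :
    ∃ e : I ≃ₗ[K] V, ∀ (g : G) (x : MonoidAlgebra K G) (hx : x ∈ I),
      e ⟨MonoidAlgebra.of K G g * x, I.mul_mem_left _ hx⟩ = ρ g (e ⟨x, hx⟩) := by
  let f : I →ₗ[MonoidAlgebra K G] ρ.asModule :=
    (LinearMap.toSpanSingleton _ _ (ρ.asModuleEquiv.symm v)).domRestrict I
  have hf (x : I) : ρ.asModuleEquiv (f x) = ρ.asAlgebraHom x v := rfl
  have hf0 : f ≠ 0 := fun h ↦ hw <| by rw [← hzv, ← hf ⟨z, hz⟩, h, LinearMap.zero_apply, map_zero]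
  let F : I →ₗ[K] V := ρ.asModuleEquiv.toLinearMap ∘ₗ f.restrictScalars K
  have hFρ (g : G) (x : MonoidAlgebra K G) (hx : x ∈ I) :
      F ⟨MonoidAlgebra.of K G g * x, I.mul_mem_left _ hx⟩ = ρ g (F ⟨x, hx⟩) := by
    change ρ.asAlgebraHom (MonoidAlgebra.of K G g * x) v = ρ g (ρ.asAlgebraHom x v)
    rw [map_mul, Representation.asAlgebraHom_of, Module.End.mul_apply]
  have hinj : Function.Injective F :=
    ρ.asModuleEquiv.injective.comp (LinearMap.injective_of_ne_zero hf0)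
  have hsurj : Function.Surjective F := by
    rw [← LinearMap.range_eq_top, eq_top_iff, ← hspan, Submodule.span_le, Set.range_subset_iff]
    exact fun g ↦ ⟨⟨_, I.mul_mem_left _ hz⟩, (hFρ g z hz).trans (congrArg (ρ g) hzv)⟩
  exact ⟨.ofBijective F ⟨hinj, hsurj⟩, hFρ⟩

end SimpleLeftIdeal

section HookSymmetrizer

open Equiv

variable {α : Type*}

/-- The sign of a permutation, as a character with values in `K`. -/
def signCharacter (K : Type*) {α : Type*} [Ring K] [Fintype α] [DecidableEq α] : Perm α →* K :=
  ((Int.castRingHom K : ℤ →* K).comp (Units.coeHom ℤ)).comp Perm.sign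

lemma signCharacter_inv_smul {K V : Type*} [Ring K] [AddCommGroup V] [Module K V] [Fintype α]
    [DecidableEq α] (σ : Perm α) (v : V) : signCharacter K σ⁻¹ • v = Perm.sign σ • v := by
  change ((Perm.sign σ⁻¹ : ℤ) : K) • v = Perm.sign σ • v
  rw [Perm.sign_inv, Int.cast_smul_eq_zsmul, Units.smul_def]

/-- The Young symmetrizer (symmetrizer of the row times antisymmetrizer of the column) of the
hook-shaped tableau with corner entry `b`, whose other column entries form the set `C`. -/
def hookSymmetrizer (K : Type*) [CommRing K] [Fintype α] [DecidableEq α] (C : Set α) (b : α) :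
    MonoidAlgebra K (Perm α) :=
  characterSum 1 (fixingSubgroup (Perm α) C) *
    characterSum (signCharacter K) (fixingSubgroup (Perm α) (insert b C)ᶜ)

lemma swap_mem_fixingSubgroup [DecidableEq α] {s : Set α} {i j : α} (hi : i ∉ s) (hj : j ∉ s) :
    swap i j ∈ fixingSubgroup (Perm α) s :=
  (mem_fixingSubgroup_iff _).mpr fun _ hy ↦
    swap_apply_of_ne_of_ne (ne_of_mem_of_not_mem hy hi) (ne_of_mem_of_not_mem hy hj)

lemma exists_mul_eq_of_forall_eq [Finite α] {C : Set α} {b x : α} (hb : b ∉ C)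
    {g : Perm α} (hgx : g x ∉ C)
    (huniq : ∀ y ∈ insert b C, g y ∉ C → y = x) :
    ∃ p ∈ fixingSubgroup (Perm α) C, ∃ q ∈ fixingSubgroup (Perm α) (insert b C)ᶜ, p * q = g := by
  classical
  let h := swap (g x) b * g
  have hmaps (y : α) (hy : y ∈ insert b C) : h y ∈ insert b C := by
    by_cases hyx : y = x
    · simp [h, hyx]
    · have hgy : g y ∈ C := by_contra fun hgy ↦ hyx (huniq y hy hgy)
      have hfix : h y = g y := swap_apply_of_ne_of_ne (g.injective.ne hyx)
        (ne_of_mem_of_not_mem hgy hb)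
      exact hfix ▸ Set.mem_insert_of_mem b hgy
  let q : Perm α := Perm.ofSubtype (Perm.subtypePermOfFintype (p := (· ∈ insert b C)) h hmaps)
  refine ⟨g * q⁻¹, (mem_fixingSubgroup_iff _).mpr fun c hc ↦ ?_, q,
    (mem_fixingSubgroup_iff _).mpr fun y hy ↦ Perm.ofSubtype_apply_of_not_mem _ hy,
    inv_mul_cancel_right g q⟩
  obtain ⟨y, rfl⟩ := q.surjective c
  have hy : y ∈ insert b C :=
    (Perm.ofSubtype_apply_mem_iff_mem _ _).mp (Set.mem_insert_of_mem b hc)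
  have hqy : q y = swap (g x) b (g y) := Perm.ofSubtype_apply_of_mem _ hy
  have hgy : g y = q y := by
    rw [← swap_apply_of_ne_of_ne (ne_of_mem_of_not_mem hc hgx) (ne_of_mem_of_not_mem hc hb), hqy,
      swap_apply_self]
  simpa using hgy

lemma exists_mul_eq_or_exists_ne [Finite α] {C : Set α} {b : α} (hb : b ∉ C) (g : Perm α) :
    (∃ p ∈ fixingSubgroup (Perm α) C, ∃ q ∈ fixingSubgroup (Perm α) (insert b C)ᶜ, p * q = g) ∨
      ∃ x ∈ insert b C, ∃ y ∈ insert b C, x ≠ y ∧ g x ∉ C ∧ g y ∉ C := by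
  obtain ⟨_, ⟨x, hx, rfl⟩, hgx⟩ : ∃ a ∈ g '' insert b C, a ∉ C := by
    refine Set.exists_mem_notMem_of_ncard_lt_ncard ?_
    rw [Set.ncard_image_of_injective _ g.injective, Set.ncard_insert_of_notMem hb]
    exact Nat.lt_succ_self _
  by_cases huniq : ∀ y ∈ insert b C, g y ∉ C → y = x
  · exact .inl (exists_mul_eq_of_forall_eq hb hgx huniq)
  · push Not at huniq
    obtain ⟨y, hy, hgy, hyx⟩ := huniq
    exact .inr ⟨x, hx, y, hy, hyx.symm, hgx, hgy⟩

variable [Fintype α] [DecidableEq α]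

lemma isSimpleModule_span_hookSymmetrizer {K : Type*} [Field K] [CharZero K] {C : Set α} {b : α}
    (hb : b ∉ C) (h0 : hookSymmetrizer K C b ≠ 0) :
    IsSimpleModule (MonoidAlgebra K (Perm α)) (Ideal.span {hookSymmetrizer K C b}) := by
  refine isSimpleModule_span_mul h0 (exists_characterSum_mul_mul_eq_smul fun g ↦ ?_)
  refine (exists_mul_eq_or_exists_ne hb g).imp_right ?_
  rintro ⟨x, hx, y, hy, hxy, hgx, hgy⟩
  refine ⟨swap (g x) (g y), swap_mem_fixingSubgroup hgx hgy, swap x y,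
    swap_mem_fixingSubgroup (not_not_intro hx) (not_not_intro hy),
    (mul_swap_eq_swap_mul g x y).symm, ?_⟩
  have : (1 : K) ≠ -1 := by norm_num
  simpa [signCharacter, hxy] using this

lemma sum_swap_mul_characterSum_one {K : Type*} [CommSemiring K] {C : Set α}
    [DecidablePred (· ∈ C)] {b : α} (hb : b ∉ C) :
    (∑ i with i ∉ C, MonoidAlgebra.of K (Perm α) (swap i b)) *
        characterSum 1 (fixingSubgroup (Perm α) (insert b C)) =
      characterSum 1 (fixingSubgroup (Perm α) C) := by
  simp only [characterSum, MonoidHom.one_apply, one_smul, Finset.sum_mul_sum, ← map_mul]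
  rw [← Finset.sum_product']
  refine Finset.sum_nbij' (fun x ↦ swap x.1 b * x.2) (fun σ ↦ (σ b, swap (σ b) b * σ))
    (fun x hx ↦ ?_) (fun σ hσ ↦ ?_) (fun x hx ↦ ?_) (fun σ _ ↦ ?_) (fun _ _ ↦ rfl)
  · simp only [Finset.mem_product, Finset.mem_filter, Finset.mem_univ, true_and] at hx ⊢
    exact mul_mem (swap_mem_fixingSubgroup hx.1 hb)
      (fixingSubgroup_antitone _ _ (Set.subset_insert b C) hx.2)
  · simp only [Finset.mem_product, Finset.mem_filter, Finset.mem_univ, true_and,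
      mem_fixingSubgroup_iff, Perm.smul_def] at hσ ⊢
    have hσb : σ b ∉ C := fun h ↦ hb (σ.injective (hσ _ h) ▸ h)
    refine ⟨hσb, ?_⟩
    rintro c (rfl | hc)
    · simp
    · rw [Perm.mul_apply, hσ c hc, swap_apply_of_ne_of_ne (ne_of_mem_of_not_mem hc hσb)
        (ne_of_mem_of_not_mem hc hb)]
  · simp only [Finset.mem_product, Finset.mem_filter, Finset.mem_univ, true_and,
      mem_fixingSubgroup_iff, Perm.smul_def] at hx
    simp [hx.2 b (Set.mem_insert b C)]
  · simp

end HookSymmetrizer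

section ExteriorPower

open Equiv

lemma alternatingMap_comp_perm_comp {R M M' ι α : Type*} [Semiring R] [AddCommMonoid M]
    [Module R M] [AddCommGroup M'] [Module R M'] [Fintype α] [DecidableEq α]
    (f : M [⋀^ι]→ₗ[R] M') (x : α → M) {c : ι → α} (hc : Function.Injective c)
    {σ : Perm α} (hσ : σ ∈ fixingSubgroup (Perm α) (Set.range c)ᶜ) :
    f (x ∘ σ ∘ c) = Perm.sign σ • f (x ∘ c) := by
  classical
  let _ : Fintype ι := Fintype.ofInjective c hc
  have hmoved (a : α) (ha : σ a ≠ a) : a ∈ Set.range c :=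
    not_not.mp fun h ↦ ha ((mem_fixingSubgroup_iff _).mp hσ a h)
  have hmem (a : α) : σ a ∈ Set.range c ↔ a ∈ Set.range c := by
    by_cases ha : σ a = a
    · rw [ha]
    · exact iff_of_true (hmoved _ (σ.injective.ne ha)) (hmoved a ha)
  let τ : Perm ι := (Equiv.ofInjective c hc).symm.permCongr (σ.subtypePerm hmem)
  have hτ : c ∘ τ = σ ∘ c := by
    ext i
    exact Equiv.apply_ofInjective_symm hc _
  have hsign : Perm.sign τ = Perm.sign σ := by
    rw [Perm.sign_permCongr]
    convert Perm.sign_subtypePerm σ hmem hmoved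
  rw [← hτ, ← Function.comp_assoc, f.map_perm, hsign]

lemma permU_one (N : ℕ) : permU N 1 = LinearMap.id := rfl

lemma permU_mul (N : ℕ) (g h : Perm (Fin N)) : permU N (g * h) = permU N g ∘ₗ permU N h := rfl

lemma permMap_single {N : ℕ} (g : Perm (Fin N)) (i : Fin N) :
    permMap N g (Pi.single i 1) = Pi.single (g i) 1 := by
  ext j
  simp [permMap, LinearMap.funLeft_apply, Pi.single_apply, Equiv.symm_apply_eq]

lemma sumMap_permMap {N : ℕ} (g : Perm (Fin N)) (x : Fin N → ℚ) :
    sumMap N (permMap N g x) = sumMap N x := by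
  simpa [sumMap, permMap, LinearMap.funLeft_apply] using Equiv.sum_comp g⁻¹ x

lemma sumMap_one (N : ℕ) : sumMap N 1 = N := by simp [sumMap]

/-- The equivariant projection of `ℚ^N` onto `U N` along the constant vectors. -/
def projU (N : ℕ) : (Fin N → ℚ) →ₗ[ℚ] U N :=
  (LinearMap.id - ((N : ℚ)⁻¹ • sumMap N).smulRight 1).codRestrict (U N) fun x ↦ by
    obtain rfl | hN := Nat.eq_zero_or_pos N
    · simp [mem_U]
    · have : (N : ℚ) ≠ 0 := by positivity
      simp [U, sumMap_one, mul_right_comm, this]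

lemma coe_projU {N : ℕ} (x : Fin N → ℚ) :
    (projU N x : Fin N → ℚ) = x - ((N : ℚ)⁻¹ * sumMap N x) • 1 := rfl

lemma projU_coe {N : ℕ} (x : U N) : projU N x = x := by
  ext1
  rw [coe_projU, LinearMap.mem_ker.mp x.2, mul_zero, zero_smul, sub_zero]

lemma projU_one {N : ℕ} (hN : N ≠ 0) : projU N 1 = 0 := by
  ext1
  rw [coe_projU, sumMap_one, inv_mul_cancel₀ (Nat.cast_ne_zero.mpr hN), one_smul, sub_self,
    ZeroMemClass.coe_zero]

lemma permU_projU {N : ℕ} (g : Perm (Fin N)) (x : Fin N → ℚ) :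
    permU N g (projU N x) = projU N (permMap N g x) := by
  ext1
  change permMap N g (projU N x) = _
  rw [coe_projU, coe_projU, map_sub, map_smul, sumMap_permMap]
  rfl

lemma span_range_projU_single (N : ℕ) :
    Submodule.span ℚ (Set.range fun i ↦ projU N (Pi.single i 1)) = ⊤ := by
  have hsurj : LinearMap.range (projU N) = ⊤ :=
    LinearMap.range_eq_top.mpr fun x ↦ ⟨x, projU_coe x⟩
  rw [← hsurj, ← Submodule.map_top, ← (Pi.basisFun ℚ (Fin N)).span_eq, Submodule.map_span,
    ← Set.range_comp]
  simp only [Function.comp_def, Pi.basisFun_apply]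

lemma finrank_U_add_one {N : ℕ} (hN : N ≠ 0) : Module.finrank ℚ (U N) + 1 = N := by
  have hs : sumMap N ≠ 0 := fun h ↦ by
    simpa [h, eq_comm, hN] using sumMap_one N
  rw [U, Module.Dual.finrank_ker_add_one_of_ne_zero (f := sumMap N) hs, Module.finrank_fin_fun]

/-- The action of the symmetric group on `⋀^k U_N`. -/
def exteriorRep (N k : ℕ) : Representation ℚ (Perm (Fin N)) (⋀[ℚ]^k (U N)) where
  toFun g := exteriorPower.map k (permU N g)
  map_one' := by rw [permU_one, exteriorPower.map_id]; rfl
  map_mul' g h := by rw [permU_mul, exteriorPower.map_comp]; rfl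

lemma exteriorRep_ιMulti {N k : ℕ} (g : Perm (Fin N)) (x : Fin k → U N) :
    exteriorRep N k g (exteriorPower.ιMulti ℚ k x) =
      exteriorPower.ιMulti ℚ k (permU N g ∘ x) :=
  exteriorPower.map_apply_ιMulti _ _

lemma coe_exteriorRep {N k : ℕ} (g : Perm (Fin N)) (x : ⋀[ℚ]^k (U N)) :
    (exteriorRep N k g x : ExteriorAlgebra ℚ (U N)) = act N g x := by
  have h : (Submodule.subtype _) ∘ₗ exteriorRep N k g = act N g ∘ₗ (⋀[ℚ]^k (U N)).subtype := by
    apply exteriorPower.linearMap_ext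
    ext m
    simp [exteriorRep_ιMulti, act, ExteriorAlgebra.map_apply_ιMulti]
  exact LinearMap.congr_fun h x

/-- The wedge product of the projections to `U N` of the basis vectors indexed by `c`. -/
def wedge {N k : ℕ} (c : Fin k → Fin N) : ⋀[ℚ]^k (U N) :=
  exteriorPower.ιMulti ℚ k fun i ↦ projU N (Pi.single (c i) 1)

lemma exteriorRep_wedge {N k : ℕ} (g : Perm (Fin N)) (c : Fin k → Fin N) :
    exteriorRep N k g (wedge c) = wedge (g ∘ c) := by
  simp only [wedge, exteriorRep_ιMulti, Function.comp_def, permU_projU, permMap_single]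

lemma span_range_exteriorRep_wedge {N k : ℕ} {c : Fin k → Fin N} (hc : Function.Injective c) :
    Submodule.span ℚ (Set.range fun g ↦ exteriorRep N k g (wedge c)) = ⊤ := by
  classical
  rw [eq_top_iff, ← exteriorPower.ιMulti_span_of_span ℚ k _ (span_range_projU_single N),
    Submodule.span_le]
  rintro _ ⟨a, ha, rfl⟩
  choose d hd using fun i ↦ ha (Set.mem_range_self i)
  obtain rfl : (fun i ↦ projU N (Pi.single (d i) 1)) = a := funext hd
  by_cases hinj : Function.Injective d
  · let g := ((Equiv.ofInjective c hc).symm.trans (Equiv.ofInjective d hinj)).extendSubtype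
    have hg : g ∘ c = d := by
      ext1 i
      rw [Function.comp_apply, Equiv.extendSubtype_apply_of_mem _ _ (Set.mem_range_self i)]
      simp
    exact Submodule.subset_span ⟨g, (exteriorRep_wedge g c).trans (congrArg wedge hg)⟩
  · obtain ⟨i, j, hij, hne⟩ := Function.not_injective_iff.mp hinj
    rw [AlternatingMap.map_eq_zero_of_eq _ _ (by rw [hij]) hne]
    exact zero_mem _

lemma wedge_ne_zero {N k : ℕ} {c : Fin k → Fin N} (hc : Function.Injective c) (hk : k < N) :
    wedge c ≠ 0 := by
  intro h
  have hN := finrank_U_add_one (Nat.ne_zero_of_lt hk)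
  have hpos : 0 < Module.finrank ℚ (⋀[ℚ]^k (U N)) := by
    rw [exteriorPower.finrank_eq]
    exact Nat.choose_pos (by omega)
  have htop := span_range_exteriorRep_wedge hc
  simp only [h, map_zero, Set.range_const, Submodule.span_zero_singleton] at htop
  rw [← finrank_top, ← htop, finrank_bot] at hpos
  exact hpos.false

end ExteriorPower

section Contraction

open Equiv

variable {N k : ℕ}

/-- The composition of the contraction of `⋀^(k+1) ℚ^N` with the sum functional and the projection
of `⋀^k ℚ^N` to `⋀^k U_N`, as an alternating map. -/
def contraction (N k : ℕ) : (Fin N → ℚ) [⋀^Fin (k + 1)]→ₗ[ℚ] ⋀[ℚ]^k (U N) :=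
  AlternatingMap.alternatizeUncurryFin
    ((sumMap N).smulRight ((exteriorPower.ιMulti ℚ k).compLinearMap (projU N)))

lemma contraction_apply (x : Fin (k + 1) → Fin N → ℚ) :
    contraction N k x =
      ∑ i : Fin (k + 1), (-1) ^ (i : ℕ) •
        sumMap N (x i) • exteriorPower.ιMulti ℚ k (projU N ∘ i.removeNth x) :=
  AlternatingMap.alternatizeUncurryFin_apply _ _

lemma exteriorRep_contraction (g : Perm (Fin N)) (x : Fin (k + 1) → Fin N → ℚ) :
    exteriorRep N k g (contraction N k x) = contraction N k (permMap N g ∘ x) := by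
  simp only [contraction_apply, map_sum, map_zsmul, map_smul, exteriorRep_ιMulti,
    Function.comp_apply, sumMap_permMap]
  refine Finset.sum_congr rfl fun i _ ↦ ?_
  congr 3
  ext1 j
  exact permU_projU g _

lemma contraction_of_projU_eq_zero {x : Fin (k + 1) → Fin N → ℚ} (hx : projU N (x 0) = 0) :
    contraction N k x = sumMap N (x 0) • exteriorPower.ιMulti ℚ k (projU N ∘ Fin.tail x) := by
  rw [contraction_apply, Fin.sum_univ_succ, Finset.sum_eq_zero fun i _ ↦ ?_]
  · simp
  · obtain - | k := k
    · exact i.elim0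
    · rw [AlternatingMap.map_coord_zero _ 0 (by simpa [Fin.removeNth_apply] using hx), smul_zero,
        smul_zero]

/-- The contraction with the sum functional of the wedge product of the basis vectors indexed by
`d`, projected to `U N`. -/
def contractedWedge (d : Fin (k + 1) → Fin N) : ⋀[ℚ]^k (U N) :=
  contraction N k fun i ↦ Pi.single (d i) 1

lemma exteriorRep_contractedWedge (g : Perm (Fin N)) (d : Fin (k + 1) → Fin N) :
    exteriorRep N k g (contractedWedge d) = contractedWedge (g ∘ d) := by
  simp only [contractedWedge, exteriorRep_contraction, Function.comp_def, permMap_single]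

lemma contractedWedge_eq_zero {d : Fin (k + 1) → Fin N} (hd : ¬ Function.Injective d) :
    contractedWedge d = 0 := by
  obtain ⟨i, j, hij, hne⟩ := Function.not_injective_iff.mp hd
  exact AlternatingMap.map_eq_zero_of_eq _ _ (by rw [hij]) hne

lemma sum_contractedWedge_update (hN : N ≠ 0) (d : Fin (k + 1) → Fin N) :
    ∑ i, contractedWedge (Function.update d 0 i) = (N : ℚ) • wedge (Fin.tail d) := by
  let x : Fin (k + 1) → Fin N → ℚ := fun j ↦ Pi.single (d j) 1
  calc ∑ i, contractedWedge (Function.update d 0 i)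
      = ∑ i, contraction N k (Function.update x 0 (Pi.single i 1)) := by
        refine Finset.sum_congr rfl fun i _ ↦ congrArg (contraction N k) ?_
        exact Function.comp_update (fun j ↦ (Pi.single j 1 : Fin N → ℚ)) d 0 i
    _ = contraction N k (Function.update x 0 1) := by
        rw [← AlternatingMap.map_update_sum]
        exact congrArg _ (congrArg _ (Finset.univ_sum_single (1 : Fin N → ℚ)))
    _ = (N : ℚ) • wedge (Fin.tail d) := by
        rw [contraction_of_projU_eq_zero (by simpa using projU_one hN), Function.update_self,
          sumMap_one, Fin.tail_update_zero]
        rfl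

lemma exteriorRep_contractedWedge_of_mem_fixingSubgroup_compl {d : Fin (k + 1) → Fin N}
    (hd : Function.Injective d) {σ : Perm (Fin N)}
    (hσ : σ ∈ fixingSubgroup (Perm (Fin N)) (Set.range d)ᶜ) :
    exteriorRep N k σ (contractedWedge d) = signCharacter ℚ σ⁻¹ • contractedWedge d := by
  rw [exteriorRep_contractedWedge]
  exact (alternatingMap_comp_perm_comp (contraction N k) (fun i ↦ Pi.single i 1) hd hσ).trans
    (signCharacter_inv_smul σ _).symm

lemma exteriorRep_contractedWedge_of_mem_fixingSubgroup {d : Fin (k + 1) → Fin N}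
    {σ : Perm (Fin N)} (hσ : σ ∈ fixingSubgroup (Perm (Fin N)) (Set.range d)) :
    exteriorRep N k σ (contractedWedge d) = contractedWedge d := by
  rw [exteriorRep_contractedWedge]
  exact congrArg _ (funext fun i ↦ (mem_fixingSubgroup_iff _).mp hσ _ (Set.mem_range_self i))

lemma sum_exteriorRep_swap_contractedWedge (hN : N ≠ 0) {d : Fin (k + 1) → Fin N}
    (hd : Function.Injective d) [DecidablePred (· ∈ Set.range (Fin.tail d))] :
    ∑ i with i ∉ Set.range (Fin.tail d), exteriorRep N k (swap i (d 0)) (contractedWedge d) =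
      (N : ℚ) • wedge (Fin.tail d) := by
  rw [← sum_contractedWedge_update hN d]
  refine (Finset.sum_congr rfl fun i hi ↦ ?_).trans <|
    Finset.sum_filter_of_ne (p := (· ∉ Set.range (Fin.tail d))) ?_
  · rw [exteriorRep_contractedWedge]
    congr 1
    ext1 j
    refine Fin.cases (by simp) (fun j ↦ ?_) j
    rw [Function.comp_apply, swap_apply_of_ne_of_ne, Function.update_of_ne (Fin.succ_ne_zero j)]
    · rintro rfl
      exact (Finset.mem_filter.mp hi).2 ⟨j, rfl⟩
    · exact hd.ne (Fin.succ_ne_zero j)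
  · rintro i - hne ⟨j, rfl⟩
    refine hne (contractedWedge_eq_zero fun h ↦ Fin.succ_ne_zero j (h ?_))
    simp [Fin.tail]

end Contraction

section HookModule

open Equiv

variable {N k : ℕ}

lemma exists_asAlgebraHom_hookSymmetrizer_eq_wedge {d : Fin (k + 1) → Fin N}
    (hd : Function.Injective d) :
    ∃ v, (exteriorRep N k).asAlgebraHom (hookSymmetrizer ℚ (Set.range (Fin.tail d)) (d 0)) v =
      wedge (Fin.tail d) := by
  classical
  have hN : N ≠ 0 := (d 0).pos.ne'
  have hrange : insert (d 0) (Set.range (Fin.tail d)) = Set.range d := by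
    rw [← Fin.range_cons, Fin.cons_self_tail]
  have hd0 : d 0 ∉ Set.range (Fin.tail d) := fun ⟨j, hj⟩ ↦ Fin.succ_ne_zero j (hd hj)
  let μ : ℚ := Nat.card (fixingSubgroup (Perm (Fin N)) (Set.range d)ᶜ) *
    (Nat.card (fixingSubgroup (Perm (Fin N)) (Set.range d)) * N)
  have hμ : μ ≠ 0 := by
    simp only [μ, ne_eq, mul_eq_zero, Nat.cast_eq_zero, hN, Nat.card_pos.ne', or_self,
      not_false_eq_true]
  refine ⟨μ⁻¹ • contractedWedge d, ?_⟩
  rw [map_smul, inv_smul_eq_iff₀ hμ, hookSymmetrizer, hrange,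
    ← sum_swap_mul_characterSum_one hd0, hrange, map_mul, map_mul, Module.End.mul_apply,
    Module.End.mul_apply,
    asAlgebraHom_characterSum_of_eigenvector _ _ _ fun σ hσ ↦
      exteriorRep_contractedWedge_of_mem_fixingSubgroup_compl hd hσ,
    map_smul,
    asAlgebraHom_characterSum_of_eigenvector _ _ _ fun σ hσ ↦
      (exteriorRep_contractedWedge_of_mem_fixingSubgroup hσ).trans (one_smul ℚ _).symm]
  simp only [map_sum, map_smul, Representation.asAlgebraHom_of, LinearMap.sum_apply]
  rw [sum_exteriorRep_swap_contractedWedge hN hd, smul_smul, smul_smul, mul_assoc]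

theorem stmt6_general (d : Fin (k + 1) ↪ Fin N) :
    hookSymmetrizer ℚ (Set.range (Fin.tail d)) (d 0) ≠ 0 ∧
    IsSimpleModule (MonoidAlgebra ℚ (Perm (Fin N)))
      (Ideal.span {hookSymmetrizer ℚ (Set.range (Fin.tail d)) (d 0)}) ∧
    ∃ e : Ideal.span {hookSymmetrizer ℚ (Set.range (Fin.tail d)) (d 0)} ≃ₗ[ℚ] ⋀[ℚ]^k (U N),
      ∀ (g : Perm (Fin N)) (x : MonoidAlgebra ℚ (Perm (Fin N)))
        (hx : x ∈ Ideal.span {hookSymmetrizer ℚ (Set.range (Fin.tail d)) (d 0)}),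
        (e ⟨MonoidAlgebra.of ℚ _ g * x, Ideal.mul_mem_left _ _ hx⟩ : ExteriorAlgebra ℚ (U N)) =
          act N g (e ⟨x, hx⟩ : ExteriorAlgebra ℚ (U N)) := by
  have htail : Function.Injective (Fin.tail d) := d.injective.comp (Fin.succ_injective k)
  have hd0 : d 0 ∉ Set.range (Fin.tail d) := fun ⟨j, hj⟩ ↦ Fin.succ_ne_zero j (d.injective hj)
  have hk : k < N := by simpa using Fintype.card_le_of_embedding d
  obtain ⟨v, hv⟩ := exists_asAlgebraHom_hookSymmetrizer_eq_wedge d.injective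
  have h0 : hookSymmetrizer ℚ (Set.range (Fin.tail d)) (d 0) ≠ 0 := fun h ↦
    wedge_ne_zero htail hk (by rw [← hv, h, map_zero, LinearMap.zero_apply])
  have hsimple := isSimpleModule_span_hookSymmetrizer hd0 h0
  obtain ⟨e, he⟩ := exists_linearEquiv_of_isSimpleModule (exteriorRep N k)
    (Ideal.mem_span_singleton_self _) hv (wedge_ne_zero htail hk)
    (span_range_exteriorRep_wedge htail)
  exact ⟨h0, hsimple, e, fun g x hx ↦ by rw [he, coe_exteriorRep]⟩

lemma yElt_eq_characterSum_mul_characterSum {t j : ℕ} {b : Fin (t + 2 * j)} (hb : (b : ℕ) = t) :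
    yElt t j = characterSum 1 (fixingSubgroup _ (Set.Ici b)) *
      characterSum (signCharacter ℚ) (fixingSubgroup _ (Set.Ici b)ᶜ) := by
  unfold yElt characterSum
  congr 1
  · refine Finset.sum_congr ?_ fun _ _ ↦ (one_smul _ _).symm
    ext
    simp [mem_fixingSubgroup_iff, Fin.le_def, hb]
  · refine Finset.sum_congr ?_ fun _ _ ↦ rfl
    ext
    simp [mem_fixingSubgroup_iff, Fin.lt_def, hb]

lemma zElt_eq_hookSymmetrizer_Ioi {t j : ℕ} (hj : 1 ≤ j) {b : Fin (t + 2 * j)}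
    (hb : (b : ℕ) = t) : zElt t j hj = hookSymmetrizer ℚ (Set.Ioi b) b := by
  have hrow : ({i | i ∉ Set.Ioi b} : Finset (Fin (t + 2 * j))) =
      Finset.univ.map (Fin.castLEEmb (by omega : t + 1 ≤ t + 2 * j)) := by
    ext i
    simp [Fin.ext_iff, Fin.exists_iff, Fin.le_def, hb]
  have hlast : Fin.castLEEmb (by omega : t + 1 ≤ t + 2 * j) (Fin.last t) = b := Fin.ext hb.symm
  rw [hookSymmetrizer, ← sum_swap_mul_characterSum_one Set.self_notMem_Ioi, Set.Ioi_insert,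
    mul_assoc, ← yElt_eq_characterSum_mul_characterSum hb, hrow, Finset.sum_map,
    Fin.sum_univ_castSucc, hlast, swap_self, ← Perm.one_def, map_one,
    add_comm (∑ _, _) (1 : MonoidAlgebra ℚ _), zElt,
    show (⟨t, by omega⟩ : Fin (t + 2 * j)) = b from Fin.ext hb.symm]
  rfl

/-- The letters `t, …, t + 2 * j - 1` (counted from `0`), which form the column of the hook
`(t + 1, 1 ^ (2 * j - 1))`, listed from the corner downwards. -/
def columnEmb (t j : ℕ) (hj : 1 ≤ j) : Fin (2 * j - 1 + 1) ↪ Fin (t + 2 * j) :=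
  (Fin.natAddEmb t).trans (Fin.castLEEmb (by omega))

lemma range_tail_columnEmb (t j : ℕ) (hj : 1 ≤ j) :
    Set.range (Fin.tail (columnEmb t j hj)) = Set.Ioi (columnEmb t j hj 0) := by
  ext i
  simp only [columnEmb, Fin.tail, Set.mem_range, Set.mem_Ioi, Function.Embedding.trans_apply,
    Fin.natAddEmb_apply, Fin.castLEEmb_apply, Fin.ext_iff, Fin.lt_def, Fin.val_castLE,
    Fin.val_natAdd, Fin.val_succ, Fin.val_zero, add_zero]
  exact ⟨fun ⟨m, hm⟩ ↦ by omega, fun hi ↦ ⟨⟨i - t - 1, by omega⟩, by dsimp only; omega⟩⟩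

lemma zElt_eq_hookSymmetrizer_columnEmb (t j : ℕ) (hj : 1 ≤ j) :
    zElt t j hj =
      hookSymmetrizer ℚ (Set.range (Fin.tail (columnEmb t j hj))) (columnEmb t j hj 0) := by
  rw [range_tail_columnEmb]
  exact zElt_eq_hookSymmetrizer_Ioi hj rfl

end HookModule

/-- For `t ≥ 2`, `j ≥ 1`, `G = S_{t+2j}` and
`z = (1 + (1 t+1) + ⋯ + (t t+1))·y ∈ ℚ[G]`, we have `z ≠ 0`, and the left ideal `ℚ[G]·z` is a
simple left `ℚ[G]`-module isomorphic to `Λ^{2j−1} U_{t+2j}` (i.e. there is a `ℚ`-linear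
equivalence commuting with the `G`-actions). -/
theorem stmt6 (t j : ℕ) (ht : 2 ≤ t) (hj : 1 ≤ j) :
    zElt t j hj ≠ 0 ∧
    IsSimpleModule (MonoidAlgebra ℚ (Equiv.Perm (Fin (t + 2*j))))
      ↥(Ideal.span {zElt t j hj}) ∧
    ∃ e : ↥(Ideal.span {zElt t j hj}) ≃ₗ[ℚ] ↥(⋀[ℚ]^(2*j-1) ↥(U (t + 2*j))),
      ∀ (g : Equiv.Perm (Fin (t + 2*j))) (x : MonoidAlgebra ℚ (Equiv.Perm (Fin (t + 2*j))))
        (hx : x ∈ Ideal.span {zElt t j hj}),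
        ((e ⟨MonoidAlgebra.of ℚ _ g * x, Ideal.mul_mem_left _ _ hx⟩ :
            ↥(⋀[ℚ]^(2*j-1) ↥(U (t + 2*j)))) : ExteriorAlgebra ℚ ↥(U (t + 2*j)))
          = act (t + 2*j) g ((e ⟨x, hx⟩ : ↥(⋀[ℚ]^(2*j-1) ↥(U (t + 2*j)))) :
              ExteriorAlgebra ℚ ↥(U (t + 2*j))) := by
  rw [zElt_eq_hookSymmetrizer_columnEmb]
  exact stmt6_general _

end
end
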